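/- Let (h_t)_{t∈ℝ} be a jointly measurable measure-preserving ergodic flow on a standard probability space (X,μ). Let ψ : [0,∞) → [0,∞) be a continuous function for which there exist constants C > 0, κ > κ' > 0 and C₁ ≥ 0 with |ψ(t) − C t^κ| ≤ C₁ (1 + t^{κ'}) for all t ≥ 0. Fix b > 0 and ε > 0. Then for every f ∈ L^1(X,μ), the shell averages A_{r,ε} f(x) = (∫_{2 sinh(br)}^{2 sinh(b(r+ε))} ψ(t) dt)^{−1} ∫_{2 sinh(br)}^{2 sinh(b(r+ε))} f(h_{−t} x) ψ(t) dt converge to ∫_X f dμ for μ-almost every x ∈ X as r → ∞. -/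

import Mathlib

open MeasureTheory Filter Topology

noncomputable section

/-!
If `∫ f < 0`, the set of points at which the orbit integrals `∫₀ᵀ f (h₋ₜ x) dt` stay bounded above
is invariant under the flow, hence null or conull. Suppose it is null, and let `Mₙ` be the running
maximum of the orbit integrals up to time `n`. Then `Mₙ → ∞`, and `Mₙ₊₁ - Mₙ ∘ h₋₁` converges
dominatedly to the orbit integral over unit time. But `Mₙ ∘ h₋₁` has the same integral as
`Mₙ ≤ Mₙ₊₁`, so `∫ f ≥ 0`. Boundedness, applied to `f - a` and `a - f`, is Birkhoff's theorem.

For the averages over shells `[lo, hi]`, let `c = ∫ f`. The primitive of `f - c` along almost every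
orbit is `o(T)`, so integration by parts against the monotone weight `C t ^ κ` leaves
`o(hi ^ (κ + 1))`. The remainder `ψ - C t ^ κ = o(t ^ κ)` contributes the same order, because the
averages of `|f|` are bounded. Since `hi / lo` stays between two constants, the lower one larger
than one, the normalizing integral has exact order `hi ^ (κ + 1)`.
-/

open Asymptotics

/-- An almost invariant set `s` is replaced by the set of points whose orbit lies in `s`
at almost every time, which is strictly invariant, and by Fubini equals `s` a.e. -/
theorem ergodicVAdd_of_forall_preimage_vadd_eq {G X : Type*} [AddGroup G] [AddAction G X]
    [MeasurableSpace G] [MeasurableAdd G] [MeasurableSpace X] [MeasurableVAdd₂ G X]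
    {μ : Measure X} [SFinite μ] [VAddInvariantMeasure G X μ]
    (ν : Measure G) [SFinite ν] [NeZero ν] [ν.IsAddRightInvariant]
    (hμ : ∀ s : Set X, MeasurableSet s → (∀ g : G, (g +ᵥ ·) ⁻¹' s = s) →
      EventuallyConst s (ae μ)) :
    ErgodicVAdd G X μ := by
  refine ⟨fun {s} hs hinv => ?_⟩
  let s' : Set X := {x | ∀ᵐ g ∂ν, g +ᵥ x ∈ s}
  have hs'_meas : MeasurableSet s' :=
    measurable_measure_prodMk_left (s := {p : X × G | p.2 +ᵥ p.1 ∉ s})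
      ((measurable_snd.vadd measurable_fst) hs.compl) (measurableSet_singleton 0)
  have hs'_inv (g : G) : (g +ᵥ ·) ⁻¹' s' = s' := by
    ext x
    have hmap := ae_map_iff (p := fun k : G => k +ᵥ x ∈ s)
      (measurable_add_const g).aemeasurable (μ := ν) ((measurable_vadd_const x) hs)
    rw [map_add_right_eq_self] at hmap
    simpa only [s', Set.mem_preimage, Set.mem_ofPred_eq, vadd_vadd] using hmap.symm
  have hss' : s =ᵐ[μ] s' := by
    have horbit : ∀ᵐ x ∂μ, ∀ᵐ g ∂ν, g +ᵥ x ∈ s ↔ x ∈ s := by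
      rw [Measure.ae_ae_comm]
      · exact .of_forall fun g => (hinv g).mem_iff
      · exact ((measurable_snd.vadd measurable_fst) hs).iff (measurable_fst hs)
    filter_upwards [horbit] with x hx
    exact propext ((eventually_congr hx).trans eventually_const).symm
  exact (hμ s' hs'_meas hs'_inv).congr hss'.symm

section Product

variable {G X : Type*} [VAdd G X] [MeasurableSpace G] [MeasurableSpace X]
  [MeasurableVAdd₂ G X] {μ : Measure X} [SFinite μ] [VAddInvariantMeasure G X μ]

lemma measurePreserving_prodMk_vadd (ν : Measure G) [SFinite ν] :
    MeasurePreserving (fun p : G × X => (p.1, p.1 +ᵥ p.2)) (ν.prod μ) (ν.prod μ) :=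
  (MeasurePreserving.id ν).skew_product (g := fun (t : G) (x : X) => t +ᵥ x) measurable_vadd
    (ae_of_all _ fun t => (measurePreserving_vadd t μ).map_eq)

lemma integrable_restrict_prod_vadd {E : Type*} [NormedAddCommGroup E] {f : X → E}
    (hf : Integrable f μ) {ν : Measure G} {s : Set G} (hs : ν s ≠ ⊤) :
    Integrable (fun p : G × X => f (p.1 +ᵥ p.2)) ((ν.restrict s).prod μ) := by
  have := isFiniteMeasure_restrict.2 hs
  exact (measurePreserving_prodMk_vadd _).integrable_comp_of_integrable (hf.comp_snd _)

end Product

section MaximalEnvelope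

variable {X : Type*} {T : X → X} {F G : X → ℝ}

/-- The running maximum of the walk with increments `F` along the orbit of `T`, with a slack `G`
above each position to make room for the moves between two integer times: the value at `n` is the
maximum of `F x + ⋯ + F (T^[n-1] x)` and of `F x + ⋯ + F (T^[k-1] x) + G (T^[k] x)` for `k < n`. -/
def maximalEnvelope (T : X → X) (F G : X → ℝ) : ℕ → X → ℝ
  | 0, _ => 0
  | n + 1, x => max (G x) (F x + maximalEnvelope T F G n (T x))

lemma monotone_maximalEnvelope (hG : 0 ≤ G) (x : X) :
    Monotone fun n => maximalEnvelope T F G n x := by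
  refine monotone_nat_of_le_succ fun n => ?_
  induction n generalizing x with
  | zero => exact le_max_of_le_left (hG x)
  | succ n ih => exact max_le_max le_rfl (add_le_add_right (ih (T x)) _)

lemma maximalEnvelope_nonneg (hG : 0 ≤ G) (n : ℕ) (x : X) : 0 ≤ maximalEnvelope T F G n x :=
  monotone_maximalEnvelope hG x n.zero_le

lemma abs_maximalEnvelope_succ_sub_le (hFG : ∀ x, |F x| ≤ G x) (n : ℕ) (x : X) :
    |maximalEnvelope T F G (n + 1) x - maximalEnvelope T F G n (T x)| ≤ G x := by
  have hG : 0 ≤ G := fun x => (abs_nonneg _).trans (hFG x)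
  have hE := maximalEnvelope_nonneg (T := T) (F := F) hG n (T x)
  have hFx := abs_le.1 (hFG x)
  rw [abs_le, neg_le_sub_iff_le_add, sub_le_iff_le_add]
  constructor
  · have := le_max_right (G x) (F x + maximalEnvelope T F G n (T x))
    grind [maximalEnvelope]
  · exact max_le (by linarith) (by linarith)

lemma maximalEnvelope_succ_sub_eventuallyEq {x : X}
    (hx : Tendsto (fun n => maximalEnvelope T F G n (T x)) atTop atTop) :
    (fun n => maximalEnvelope T F G (n + 1) x - maximalEnvelope T F G n (T x))
      =ᶠ[atTop] fun _ => F x := by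
  filter_upwards [hx.eventually_ge_atTop (G x - F x)] with n hn
  rw [maximalEnvelope, max_eq_right (by linarith), add_sub_cancel_right]

variable [MeasurableSpace X] {μ : Measure X}

lemma integrable_maximalEnvelope (hT : MeasurePreserving T μ μ) (hF : Integrable F μ)
    (hG : Integrable G μ) (n : ℕ) : Integrable (maximalEnvelope T F G n) μ := by
  induction n with
  | zero => exact integrable_zero _ _ _
  | succ n ih => exact hG.sup (hF.add (hT.integrable_comp_of_integrable ih))

/-- The integral of `maximalEnvelope T F G (n + 1) - maximalEnvelope T F G n ∘ T`, which tends to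
that of `F`, is by invariance that of the nonnegative increment
`maximalEnvelope T F G (n + 1) - maximalEnvelope T F G n`. -/
theorem integral_nonneg_of_not_bddAbove_maximalEnvelope (hT : MeasurePreserving T μ μ)
    (hF : Integrable F μ) (hG : Integrable G μ) (hFG : ∀ x, |F x| ≤ G x)
    (hunbdd : ∀ᵐ x ∂μ, ¬ BddAbove (Set.range fun n => maximalEnvelope T F G n x)) :
    0 ≤ ∫ x, F x ∂μ := by
  have hG₀ : 0 ≤ G := fun x => (abs_nonneg _).trans (hFG x)
  have hE := integrable_maximalEnvelope hT hF hG
  have hET (n : ℕ) : Integrable (fun x => maximalEnvelope T F G n (T x)) μ :=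
    hT.integrable_comp_of_integrable (hE n)
  have hlim : Tendsto
      (fun n => ∫ x, maximalEnvelope T F G (n + 1) x - maximalEnvelope T F G n (T x) ∂μ)
      atTop (𝓝 (∫ x, F x ∂μ)) := by
    refine tendsto_integral_of_dominated_convergence G
      (fun n => ((hE (n + 1)).sub (hET n)).aestronglyMeasurable) hG
      (fun n => ae_of_all _ (abs_maximalEnvelope_succ_sub_le hFG n)) ?_
    filter_upwards [hT.quasiMeasurePreserving.ae hunbdd] with x hx
    exact (tendsto_congr' (maximalEnvelope_succ_sub_eventuallyEq
      (tendsto_atTop_atTop_of_monotone' (monotone_maximalEnvelope hG₀ _) hx))).2 tendsto_const_nhds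
  refine ge_of_tendsto' hlim fun n => ?_
  have hinv : ∫ x, maximalEnvelope T F G n (T x) ∂μ = ∫ x, maximalEnvelope T F G n x ∂μ := by
    rw [← integral_map hT.aemeasurable (by simpa only [hT.map_eq] using (hE n).1), hT.map_eq]
  rw [integral_sub (hE _) (hET n), hinv, sub_nonneg]
  exact integral_mono (hE n) (hE _) fun x => monotone_maximalEnvelope hG₀ x n.le_succ

end MaximalEnvelope

lemma nullMeasurableSet_bddAbove_range {ι X : Type*} [Countable ι] [MeasurableSpace X]
    {μ : Measure X} {S : ι → X → ℝ} (hS : ∀ i, AEMeasurable (S i) μ) :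
    NullMeasurableSet {x | BddAbove (Set.range fun i => S i x)} μ := by
  refine (measurableSet_bddAbove_range fun i =>
    (hS i).measurable_mk).nullMeasurableSet.congr (Filter.eventuallyEq_set.2 ?_)
  filter_upwards [ae_all_iff.2 fun i => (hS i).ae_eq_mk] with x hx
  simp only [hx]

lemma bddAbove_image_Ici_iff {α β : Type*} [TopologicalSpace α] [LinearOrder α]
    [CompactIccSpace α] [TopologicalSpace β] [LinearOrder β] [ClosedIciTopology β] [Nonempty β]
    {S : α → β} (hS : Continuous S) (a b : α) :
    BddAbove (S '' Set.Ici a) ↔ BddAbove (S '' Set.Ici b) := by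
  wlog hab : a ≤ b generalizing a b
  · exact (this b a (le_of_not_ge hab)).symm
  rw [← Set.Icc_union_Ici_eq_Ici hab, Set.image_union, bddAbove_union]
  exact and_iff_right (isCompact_Icc.bddAbove_image hS.continuousOn)

lemma bddAbove_range_comp_denseRange_iff {ι α β : Type*} [TopologicalSpace α]
    [TopologicalSpace β] [Preorder β] [ClosedIicTopology β] {S : α → β} (hS : Continuous S)
    {d : ι → α} (hd : DenseRange d) :
    BddAbove (Set.range fun i => S (d i)) ↔ BddAbove (Set.range S) := by
  rw [← Function.comp_def, Set.range_comp, BddAbove, hd.upperBounds_image hS, BddAbove]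

lemma ae_locallyIntegrable_vadd {G X E : Type*} [TopologicalSpace G] [WeaklyLocallyCompactSpace G]
    [SigmaCompactSpace G] [VAdd G X] [MeasurableSpace G] [MeasurableSpace X]
    [MeasurableVAdd₂ G X] {μ : Measure X} [SFinite μ] [VAddInvariantMeasure G X μ]
    [NormedAddCommGroup E] {f : X → E} (hf : Integrable f μ) (ν : Measure G)
    [IsFiniteMeasureOnCompacts ν] :
    ∀ᵐ x ∂μ, LocallyIntegrable (fun t : G => f (t +ᵥ x)) ν := by
  let K : CompactExhaustion G := default
  have hK (n : ℕ) : ∀ᵐ x ∂μ, IntegrableOn (fun t : G => f (t +ᵥ x)) (K n) ν :=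
    (integrable_restrict_prod_vadd hf (K.isCompact n).measure_ne_top).prod_left_ae
  filter_upwards [ae_all_iff.2 hK] with x hx t
  obtain ⟨n, hn⟩ := K.exists_mem_nhds t
  exact ⟨K n, hn, hx n⟩

lemma locallyIntegrable_vadd_vadd {X E : Type*} [AddAction ℝ X] [NormedAddCommGroup E] {f : X → E}
    {x : X} (hx : LocallyIntegrable fun t : ℝ => f (t +ᵥ x)) (s : ℝ) :
    LocallyIntegrable fun t : ℝ => f (t +ᵥ s +ᵥ x) := by
  rw [← map_add_right_eq_self volume s] at hx
  have hshift := (locallyIntegrable_map_homeomorph (Homeomorph.addRight s)).1 hx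
  simp only [vadd_vadd]
  exact hshift

lemma intervalIntegrable_of_locallyIntegrable {E : Type*} [NormedAddCommGroup E] {g : ℝ → E}
    {ν : Measure ℝ} (hg : LocallyIntegrable g ν) (a b : ℝ) : IntervalIntegrable g ν a b :=
  (hg.integrableOn_isCompact isCompact_uIcc).intervalIntegrable

section OrbitIntegral

variable {X E : Type*} [NormedAddCommGroup E] [NormedSpace ℝ E]

/-- The integral of `f` over the piece of the orbit of `x` swept out up to time `T`. -/
def orbitIntegral [VAdd ℝ X] (f : X → E) (T : ℝ) (x : X) : E :=
  ∫ t in (0 : ℝ)..T, f (t +ᵥ x)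

section Pointwise

variable [AddAction ℝ X]

lemma orbitIntegral_add {f : X → E} {x : X}
    (hx : LocallyIntegrable fun t : ℝ => f (t +ᵥ x)) (s t : ℝ) :
    orbitIntegral f (s + t) x = orbitIntegral f s x + orbitIntegral f t (s +ᵥ x) := by
  have hint := intervalIntegrable_of_locallyIntegrable hx
  simp only [orbitIntegral, vadd_vadd]
  rw [intervalIntegral.integral_comp_add_right (fun u => f (u +ᵥ x)), zero_add, add_comm t,
    intervalIntegral.integral_add_adjacent_intervals (hint _ _) (hint _ _)]

lemma continuous_orbitIntegral {f : X → E} {x : X}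
    (hx : LocallyIntegrable fun t : ℝ => f (t +ᵥ x)) :
    Continuous fun T => orbitIntegral f T x :=
  intervalIntegral.continuous_primitive (intervalIntegrable_of_locallyIntegrable hx) 0

lemma bddAbove_orbitIntegral_vadd_iff {f : X → ℝ} {x : X}
    (hx : LocallyIntegrable fun t : ℝ => f (t +ᵥ x)) (s : ℝ) :
    BddAbove ((orbitIntegral f · (s +ᵥ x)) '' Set.Ici 0) ↔
      BddAbove ((orbitIntegral f · x) '' Set.Ici 0) := by
  have himage : (orbitIntegral f · x) '' Set.Ici s
      = (orbitIntegral f s x + ·) '' ((orbitIntegral f · (s +ᵥ x)) '' Set.Ici 0) := by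
    simp only [Set.image_image, ← orbitIntegral_add hx]
    rw [← Set.image_image (orbitIntegral f · x) (s + ·), Set.image_const_add_Ici, add_zero]
  rw [← bddAbove_image_Ici_iff (continuous_orbitIntegral hx) s 0, himage]
  exact ((OrderIso.addLeft _).bddAbove_image).symm

lemma orbitIntegral_le_maximalEnvelope {f : X → ℝ} {x : X}
    (hx : LocallyIntegrable fun t : ℝ => f (t +ᵥ x)) {n : ℕ} {T : ℝ} (hT : 0 ≤ T) (hTn : T ≤ n) :
    orbitIntegral f T x ≤ maximalEnvelope (fun y => (1 : ℝ) +ᵥ y) (orbitIntegral f 1)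
      (orbitIntegral (fun y => |f y|) 1) n x := by
  induction n generalizing T x with
  | zero =>
    obtain rfl : T = 0 := le_antisymm (mod_cast hTn) hT
    exact intervalIntegral.integral_same.le
  | succ n ih =>
    rcases le_total T 1 with hT1 | hT1
    · have hint := intervalIntegrable_of_locallyIntegrable hx
      refine le_max_of_le_left ?_
      calc orbitIntegral f T x ≤ orbitIntegral (fun y => |f y|) T x :=
            intervalIntegral.integral_mono_on hT (hint _ _) (hint _ _).abs
              fun t _ => le_abs_self _
        _ ≤ orbitIntegral (fun y => |f y|) 1 x :=
            intervalIntegral.integral_mono_interval le_rfl hT hT1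
              (ae_of_all _ fun t => abs_nonneg _) (hint _ _).abs
    · refine le_max_of_le_right ?_
      rw [← add_sub_cancel 1 T, orbitIntegral_add hx]
      push_cast at hTn
      gcongr
      exact ih (locallyIntegrable_vadd_vadd hx 1) (by linarith) (by linarith)

end Pointwise

variable [MeasurableSpace X] {μ : Measure X} [SFinite μ]

lemma integrable_orbitIntegral [VAdd ℝ X] [MeasurableVAdd₂ ℝ X] [VAddInvariantMeasure ℝ X μ]
    {f : X → E} (hf : Integrable f μ) (T : ℝ) : Integrable (orbitIntegral f T) μ := by
  have hT : volume (Set.uIoc 0 T) ≠ ⊤ := by simp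
  have hint := (integrable_restrict_prod_vadd hf hT).integral_prod_right
  unfold orbitIntegral
  simp only [intervalIntegral.intervalIntegral_eq_integral_uIoc]
  exact hint.smul _

lemma integral_orbitIntegral [CompleteSpace E] [AddAction ℝ X] [MeasurableVAdd₂ ℝ X]
    [VAddInvariantMeasure ℝ X μ] {f : X → E} (hf : Integrable f μ) (T : ℝ) :
    ∫ x, orbitIntegral f T x ∂μ = T • ∫ x, f x ∂μ := by
  have hT : volume (Set.uIoc 0 T) ≠ ⊤ := by simp
  simp only [orbitIntegral]
  rw [← intervalIntegral_integral_swap (integrable_restrict_prod_vadd hf hT)]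
  simp only [integral_vadd_eq_self, intervalIntegral.integral_const, sub_zero]

end OrbitIntegral

section Birkhoff

variable {X : Type*} [AddAction ℝ X] [MeasurableSpace X] [MeasurableVAdd₂ ℝ X]
  {μ : Measure X} {f : X → ℝ}

lemma nullMeasurableSet_bddAbove_orbitIntegral [SFinite μ] [VAddInvariantMeasure ℝ X μ]
    (hf : Integrable f μ) :
    NullMeasurableSet {x | BddAbove ((orbitIntegral f · x) '' Set.Ici 0)} μ := by
  let d : ℕ → NNReal := TopologicalSpace.denseSeq NNReal
  refine (nullMeasurableSet_bddAbove_range (S := fun n => orbitIntegral f (d n)) fun n =>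
    (integrable_orbitIntegral hf _).aemeasurable).congr (eventuallyEq_set.2 ?_)
  filter_upwards [ae_locallyIntegrable_vadd hf (volume : Measure ℝ)] with x hx
  have hcont := (continuous_orbitIntegral hx).comp NNReal.continuous_coe
  have hdense := bddAbove_range_comp_denseRange_iff hcont (TopologicalSpace.denseRange_denseSeq _)
  rwa [Set.range_comp, NNReal.range_coe] at hdense

theorem ae_bddAbove_orbitIntegral_of_integral_neg [SFinite μ] [ErgodicVAdd ℝ X μ]
    (hf : Integrable f μ) (hneg : ∫ x, f x ∂μ < 0) :
    ∀ᵐ x ∂μ, BddAbove ((orbitIntegral f · x) '' Set.Ici 0) := by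
  have hloc := ae_locallyIntegrable_vadd hf (volume : Measure ℝ)
  have hinv (t : ℝ) : (t +ᵥ ·) ⁻¹' {x | BddAbove ((orbitIntegral f · x) '' Set.Ici 0)}
      =ᵐ[μ] {x | BddAbove ((orbitIntegral f · x) '' Set.Ici 0)} := by
    refine eventuallyEq_set.2 ?_
    filter_upwards [hloc] with x hx using bddAbove_orbitIntegral_vadd_iff hx t
  refine (eventuallyConst_set.1 (aeconst_of_forall_preimage_vadd_ae_eq ℝ
    (nullMeasurableSet_bddAbove_orbitIntegral hf) hinv)).resolve_right fun hunbdd => ?_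
  refine hneg.not_ge ?_
  rw [← one_smul ℝ (∫ x, f x ∂μ), ← integral_orbitIntegral hf]
  refine integral_nonneg_of_not_bddAbove_maximalEnvelope (measurePreserving_vadd (1 : ℝ) μ)
    (integrable_orbitIntegral hf 1) (integrable_orbitIntegral hf.abs 1)
    (fun x => intervalIntegral.abs_integral_le_integral_abs zero_le_one) ?_
  filter_upwards [hunbdd, hloc] with x hx hxloc
  refine fun ⟨M, hM⟩ => hx ⟨M, Set.forall_mem_image.2 fun T hT => ?_⟩
  exact (orbitIntegral_le_maximalEnvelope hxloc hT (Nat.le_ceil T)).trans (hM ⟨_, rfl⟩)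

variable [ErgodicVAdd ℝ X μ] [IsProbabilityMeasure μ]

lemma ae_eventually_inv_mul_orbitIntegral_lt (hf : Integrable f μ) {a : ℝ}
    (ha : ∫ x, f x ∂μ < a) : ∀ᵐ x ∂μ, ∀ᶠ T in atTop, T⁻¹ * orbitIntegral f T x < a := by
  obtain ⟨a', ha', haa'⟩ := exists_between ha
  have hneg : ∫ x, (f x - a') ∂μ < 0 := by
    rw [integral_sub hf (integrable_const a'), integral_const, probReal_univ, one_smul]
    exact sub_neg.2 ha'
  filter_upwards [ae_bddAbove_orbitIntegral_of_integral_neg (hf.sub (integrable_const a')) hneg,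
    ae_locallyIntegrable_vadd hf (volume : Measure ℝ)] with x ⟨M, hM⟩ hx
  filter_upwards [eventually_gt_atTop 0, tendsto_id.atTop_mul_const (sub_pos.2 haa')
    |>.eventually_gt_atTop M] with T hT hMT
  have hle : orbitIntegral (fun y => f y - a') T x ≤ M := hM ⟨T, hT.le, rfl⟩
  have hsub : orbitIntegral (fun y => f y - a') T x = orbitIntegral f T x - T * a' := by
    simp only [orbitIntegral]
    rw [intervalIntegral.integral_sub (intervalIntegrable_of_locallyIntegrable hx _ _)
      intervalIntegrable_const, intervalIntegral.integral_const, sub_zero, smul_eq_mul]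
  rw [inv_mul_lt_iff₀ hT]
  simp only [id] at hMT
  linarith

theorem ae_tendsto_inv_mul_orbitIntegral (hf : Integrable f μ) :
    ∀ᵐ x ∂μ, Tendsto (fun T => T⁻¹ * orbitIntegral f T x) atTop (𝓝 (∫ x, f x ∂μ)) := by
  have hupper (g : X → ℝ) (hg : Integrable g μ) : ∀ᵐ x ∂μ, ∀ a > ∫ y, g y ∂μ,
      ∀ᶠ T in atTop, T⁻¹ * orbitIntegral g T x < a := by
    have hrat : ∀ᵐ x ∂μ, ∀ q : ℚ, ∫ y, g y ∂μ < q →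
        ∀ᶠ T in atTop, T⁻¹ * orbitIntegral g T x < q :=
      ae_all_iff.2 fun q =>
        eventually_imp_distrib_left.2 (ae_eventually_inv_mul_orbitIntegral_lt hg)
    filter_upwards [hrat] with x hx a ha
    obtain ⟨q, hq, hqa⟩ := exists_rat_btwn ha
    exact (hx q hq).mono fun T hT => hT.trans hqa
  filter_upwards [hupper f hf, hupper (-f) hf.neg] with x hx hx'
  refine tendsto_order.2 ⟨fun a ha => ?_, hx⟩
  have hneg := hx' (-a) (by rw [integral_neg']; exact neg_lt_neg ha)
  filter_upwards [hneg] with T hT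
  simpa [orbitIntegral] using hT

end Birkhoff

/-- Integration by parts moves the derivative onto `w`, whose total variation on `[a, b]` is
`w b - w a`. -/
lemma abs_integral_mul_le_of_monotoneOn {w g : ℝ → ℝ} {a b δ : ℝ} (hab : a ≤ b)
    (hw : MonotoneOn w (Set.Icc a b)) (hwac : AbsolutelyContinuousOnInterval w a b)
    (hwa : 0 ≤ w a) (hg : IntervalIntegrable g volume a b)
    (hδ : ∀ t ∈ Set.Icc a b, |∫ s in t..b, g s| ≤ δ) :
    |∫ t in a..b, w t * g t| ≤ w b * δ := by
  let H : ℝ → ℝ := fun t => ∫ s in b..t, g s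
  have hHδ (t : ℝ) (ht : t ∈ Set.Icc a b) : |H t| ≤ δ := by
    simpa only [H, intervalIntegral.integral_symm t, abs_neg] using hδ t ht
  have hHac : AbsolutelyContinuousOnInterval H a b :=
    hg.absolutelyContinuousOnInterval_intervalIntegral Set.right_mem_uIcc
  have hderiv : ∫ t in a..b, w t * g t = ∫ t in a..b, w t * deriv H t := by
    refine intervalIntegral.integral_congr_ae ?_
    filter_upwards [hg.ae_hasDerivAt_integral] with t ht htab
    rw [(ht (Set.uIoc_subset_uIcc htab) b Set.right_mem_uIcc).deriv]
  have hparts : ∫ t in a..b, w t * g t = -(w a * H a) - ∫ t in a..b, deriv w t * H t := by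
    rw [hderiv, hwac.integral_mul_deriv_eq_deriv_mul hHac]
    simp only [H, intervalIntegral.integral_same, mul_zero, zero_sub]
  have hvariation : ‖∫ t in a..b, deriv w t * H t‖ ≤ (w b - w a) * δ := by
    rw [← hwac.integral_deriv_eq_sub, ← intervalIntegral.integral_mul_const δ]
    refine intervalIntegral.norm_integral_le_of_norm_le hab ?_
      (hwac.intervalIntegrable_deriv.mul_const δ)
    filter_upwards [compl_mem_ae_iff.2 (measure_singleton b)] with t htb ht
    have hnonneg : 0 ≤ deriv w t := by
      rw [← derivWithin_of_mem_nhds (Icc_mem_nhds ht.1 (ht.2.lt_of_ne htb))]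
      exact hw.derivWithin_nonneg
    rw [Real.norm_eq_abs, abs_mul, abs_of_nonneg hnonneg]
    exact mul_le_mul_of_nonneg_left (hHδ t ⟨ht.1.le, ht.2⟩) hnonneg
  calc |∫ t in a..b, w t * g t| ≤ |w a * H a| + |∫ t in a..b, deriv w t * H t| := by
        rw [hparts, ← abs_neg (w a * H a)]
        exact abs_sub _ _
    _ ≤ w a * δ + (w b - w a) * δ := by
        rw [abs_mul, abs_of_nonneg hwa]
        gcongr
        · exact hHδ a ⟨le_rfl, hab⟩
        · exact hvariation
    _ = w b * δ := by ring

lemma absolutelyContinuousOnInterval_rpow {a b : ℝ} (ha : 0 < a) (hab : a ≤ b) (κ : ℝ) :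
    AbsolutelyContinuousOnInterval (fun t : ℝ => t ^ κ) a b := by
  refine ContDiffOn.absolutelyContinuousOnInterval fun t ht => ?_
  rw [Set.uIcc_of_le hab] at ht
  exact (Real.contDiffAt_rpow_const_of_ne (ha.trans_le ht.1).ne').contDiffWithinAt

section Shells

variable {ι : Type*} {l : Filter ι} {lo hi : ι → ℝ} {g φ ψ : ℝ → ℝ} {κ : ℝ}

lemma isLittleO_integral_rpow_mul (hg : LocallyIntegrable g)
    (hmean : (fun T => ∫ t in (0 : ℝ)..T, g t) =o[atTop] fun T => T) (hκ : 0 ≤ κ)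
    (hlo : Tendsto lo l atTop) (hle : ∀ᶠ r in l, lo r ≤ hi r) :
    (fun r => ∫ t in lo r..hi r, t ^ κ * g t) =o[l] fun r => hi r ^ (κ + 1) := by
  have hint := intervalIntegrable_of_locallyIntegrable hg
  refine isLittleO_iff.2 fun δ hδ => ?_
  have hprim := eventually_forall_ge_atTop.2 (isLittleO_iff.1 hmean (half_pos hδ))
  filter_upwards [hle, hlo.eventually_gt_atTop 0, hlo.eventually hprim] with r hr hpos hlarge
  have hhi : 0 < hi r := hpos.trans_le hr
  have htail (t : ℝ) (ht : t ∈ Set.Icc (lo r) (hi r)) :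
      |∫ s in t..hi r, g s| ≤ δ * hi r := by
    rw [← intervalIntegral.integral_interval_sub_left (hint 0 _) (hint 0 _)]
    have ht₀ : 0 < t := hpos.trans_le ht.1
    have hbound_hi := hlarge _ hr
    have hbound_t := hlarge t ht.1
    rw [Real.norm_of_nonneg hhi.le] at hbound_hi
    rw [Real.norm_of_nonneg ht₀.le] at hbound_t
    calc |(∫ s in (0 : ℝ)..hi r, g s) - ∫ s in (0 : ℝ)..t, g s|
        ≤ δ / 2 * hi r + δ / 2 * t := (abs_sub _ _).trans (add_le_add hbound_hi hbound_t)
      _ ≤ δ / 2 * hi r + δ / 2 * hi r := by gcongr; exact ht.2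
      _ = δ * hi r := by ring
  calc ‖∫ t in lo r..hi r, t ^ κ * g t‖ ≤ hi r ^ κ * (δ * hi r) :=
        abs_integral_mul_le_of_monotoneOn hr
          ((Real.monotoneOn_rpow_Ici_of_exponent_nonneg hκ).mono fun t ht => hpos.le.trans ht.1)
          (absolutelyContinuousOnInterval_rpow hpos hr κ) (Real.rpow_nonneg hpos.le κ)
          (hint _ _) htail
    _ = δ * ‖hi r ^ (κ + 1)‖ := by
        rw [Real.norm_of_nonneg (by positivity), Real.rpow_add_one hhi.ne']
        ring

lemma eventually_forall_Ioc_norm_le {c : ℝ} (hc : 0 ≤ c)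
    (hφ : IsBigOWith c atTop φ fun t => t ^ κ) (hκ : 0 ≤ κ) (hlo : Tendsto lo l atTop) :
    ∀ᶠ r in l, ∀ t ∈ Set.Ioc (lo r) (hi r), ‖φ t‖ ≤ c * hi r ^ κ := by
  filter_upwards [hlo.eventually_ge_atTop 0,
    hlo.eventually (eventually_forall_ge_atTop.2 hφ.bound)] with r hpos hlarge t ht
  have ht₀ : 0 ≤ t := hpos.trans ht.1.le
  calc ‖φ t‖ ≤ c * ‖t ^ κ‖ := hlarge t ht.1.le
    _ = c * t ^ κ := by rw [Real.norm_of_nonneg (Real.rpow_nonneg ht₀ κ)]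
    _ ≤ c * hi r ^ κ := by gcongr; exact ht.2

lemma isLittleO_integral_mul (hg : LocallyIntegrable g)
    (hmean : (fun T => ∫ t in (0 : ℝ)..T, |g t|) =O[atTop] fun T => T)
    (hφ : φ =o[atTop] fun t => t ^ κ) (hκ : 0 ≤ κ)
    (hlo : Tendsto lo l atTop) (hle : ∀ᶠ r in l, lo r ≤ hi r) :
    (fun r => ∫ t in lo r..hi r, φ t * g t) =o[l] fun r => hi r ^ (κ + 1) := by
  have hint (a b : ℝ) := (intervalIntegrable_of_locallyIntegrable hg a b).abs
  obtain ⟨K, hK, hprim⟩ := hmean.exists_pos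
  refine isLittleO_iff.2 fun δ hδ => ?_
  filter_upwards [hle, hlo.eventually_gt_atTop 0,
    (tendsto_atTop_mono' l hle hlo).eventually hprim.bound,
    eventually_forall_Ioc_norm_le (div_pos hδ hK).le (hφ.forall_isBigOWith (div_pos hδ hK)) hκ hlo]
    with r hr hpos hbound hsup
  have hhi : 0 < hi r := hpos.trans_le hr
  calc ‖∫ t in lo r..hi r, φ t * g t‖ ≤ ∫ t in lo r..hi r, δ / K * hi r ^ κ * |g t| := by
        refine intervalIntegral.norm_integral_le_of_norm_le hr (ae_of_all _ fun t ht => ?_)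
          ((hint _ _).const_mul _)
        rw [norm_mul]
        exact mul_le_mul_of_nonneg_right (hsup t ht) (norm_nonneg _)
    _ = δ / K * hi r ^ κ * ∫ t in lo r..hi r, |g t| := intervalIntegral.integral_const_mul _ _
    _ ≤ δ / K * hi r ^ κ * ∫ t in (0 : ℝ)..hi r, |g t| := by
        gcongr
        exact intervalIntegral.integral_mono_interval hpos.le hr le_rfl
          (ae_of_all _ fun t => abs_nonneg _) (hint _ _)
    _ ≤ δ / K * hi r ^ κ * (K * hi r) := by
        gcongr
        simpa only [Real.norm_of_nonneg hhi.le] using (le_abs_self _).trans hbound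
    _ = δ * ‖hi r ^ (κ + 1)‖ := by
        rw [Real.norm_of_nonneg (by positivity), Real.rpow_add_one hhi.ne']
        field_simp

lemma eventually_intervalIntegrable_mul (hg : LocallyIntegrable g)
    (hψ_meas : AEStronglyMeasurable ψ (volume.restrict (Set.Ici 0)))
    (hψ : ψ =O[atTop] fun t => t ^ κ) (hκ : 0 ≤ κ)
    (hlo : Tendsto lo l atTop) (hle : ∀ᶠ r in l, lo r ≤ hi r) :
    ∀ᶠ r in l, IntervalIntegrable (fun t => ψ t * g t) volume (lo r) (hi r) := by
  obtain ⟨K, hK, hbound⟩ := hψ.exists_pos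
  filter_upwards [hle, hlo.eventually_ge_atTop 0,
    eventually_forall_Ioc_norm_le hK.le hbound hκ hlo] with r hr hpos hsup
  have hgi := intervalIntegrable_of_locallyIntegrable hg (lo r) (hi r)
  rw [intervalIntegrable_iff_integrableOn_Ioc_of_le hr] at hgi ⊢
  refine hgi.bdd_mul (hψ_meas.mono_measure <| Measure.restrict_mono ?_ le_rfl)
    (ae_restrict_of_forall_mem measurableSet_Ioc hsup)
  exact fun t ht => hpos.trans ht.1.le

lemma isBigO_integral_of_isEquivalent {C : ℝ}
    (hψ_int : ∀ᶠ r in l, IntervalIntegrable ψ volume (lo r) (hi r))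
    (hψ : ψ ~[atTop] fun t => C * t ^ κ) (hC : 0 < C) (hκ : 0 ≤ κ)
    (hlo : Tendsto lo l atTop) (hle : ∀ᶠ r in l, lo r ≤ hi r) :
    (fun r => lo r ^ κ * (hi r - lo r)) =O[l] fun r => ∫ t in lo r..hi r, ψ t := by
  refine .of_bound (C / 2)⁻¹ ?_
  filter_upwards [hle, hlo.eventually_ge_atTop 0, hψ_int, hlo.eventually
    (eventually_forall_ge_atTop.2 (isLittleO_iff.1 hψ.isLittleO one_half_pos))]
    with r hr hpos hint hlarge
  have hlower (t : ℝ) (ht : t ∈ Set.Icc (lo r) (hi r)) : C / 2 * lo r ^ κ ≤ ψ t := by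
    have hmono : C * lo r ^ κ ≤ C * t ^ κ := by gcongr; exact ht.1
    have hnear := hlarge t ht.1
    rw [Pi.sub_apply, Real.norm_of_nonneg ((by positivity : 0 ≤ C * lo r ^ κ).trans hmono)] at hnear
    linarith [neg_le_of_abs_le hnear]
  have hintegral : (hi r - lo r) * (C / 2 * lo r ^ κ) ≤ ∫ t in lo r..hi r, ψ t := by
    simpa only [intervalIntegral.integral_const, smul_eq_mul] using
      intervalIntegral.integral_mono_on hr intervalIntegrable_const hint hlower
  rw [Real.norm_of_nonneg (mul_nonneg (Real.rpow_nonneg hpos κ) (sub_nonneg.2 hr)),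
    le_inv_mul_iff₀ (half_pos hC)]
  calc C / 2 * (lo r ^ κ * (hi r - lo r)) = (hi r - lo r) * (C / 2 * lo r ^ κ) := by ring
    _ ≤ ‖∫ t in lo r..hi r, ψ t‖ := hintegral.trans (le_abs_self _)

lemma isBigO_rpow_add_one_of_mem_Icc {σ τ : ℝ} (hκ : 0 ≤ κ) (hlo : Tendsto lo l atTop) (hσ : 1 < σ)
    (hhi : ∀ᶠ r in l, hi r ∈ Set.Icc (σ * lo r) (τ * lo r)) :
    (fun r => hi r ^ (κ + 1)) =O[l] fun r => lo r ^ κ * (hi r - lo r) := by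
  have hpos := hlo.eventually_gt_atTop 0
  have hhi_pos : ∀ᶠ r in l, 0 < hi r := by
    filter_upwards [hhi, hpos] with r hr hr₀ using (by positivity : 0 < σ * lo r).trans_le hr.1
  have hlo_bound : hi =O[l] lo := by
    refine .of_bound τ ?_
    filter_upwards [hhi, hpos, hhi_pos] with r hr hr₀ hr₁
    rw [Real.norm_of_nonneg hr₀.le, Real.norm_of_nonneg hr₁.le]
    exact hr.2
  have hgap_bound : hi =O[l] fun r => hi r - lo r := by
    refine .of_bound (σ / (σ - 1)) ?_
    filter_upwards [hhi, hhi_pos] with r hr hr₁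
    rw [Real.norm_of_nonneg hr₁.le, div_mul_eq_mul_div, le_div_iff₀ (sub_pos.2 hσ)]
    nlinarith [hr.1, le_abs_self (hi r - lo r), Real.norm_eq_abs (hi r - lo r)]
  refine ((hlo_bound.rpow hκ (hpos.mono fun r => le_of_lt)).mul hgap_bound).congr' ?_ .rfl
  filter_upwards [hhi_pos] with r hr using (Real.rpow_add_one hr.ne' κ).symm

lemma isLittleO_integral_sub_const {c : ℝ} (hg : LocallyIntegrable g)
    (hmean : Tendsto (fun T => T⁻¹ * ∫ t in (0 : ℝ)..T, g t) atTop (𝓝 c)) :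
    (fun T => ∫ t in (0 : ℝ)..T, g t - c) =o[atTop] fun T => T := by
  have hzero : Tendsto (fun T => (∫ t in (0 : ℝ)..T, g t - c) / T) atTop (𝓝 0) := by
    have hlim := hmean.sub_const c
    rw [sub_self] at hlim
    refine hlim.congr' ?_
    filter_upwards [eventually_ne_atTop 0] with T hT
    rw [intervalIntegral.integral_sub (intervalIntegrable_of_locallyIntegrable hg _ _)
      intervalIntegrable_const, intervalIntegral.integral_const, smul_eq_mul, sub_zero]
    field_simp
  exact (isLittleO_iff_tendsto' ((eventually_ne_atTop 0).mono fun T hT h => absurd h hT)).2 hzero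

lemma isLittleO_integral_mul_sub {c C : ℝ} (hg : LocallyIntegrable g)
    (hmean : Tendsto (fun T => T⁻¹ * ∫ t in (0 : ℝ)..T, g t) atTop (𝓝 c))
    (hmean_abs : (fun T => ∫ t in (0 : ℝ)..T, |g t|) =O[atTop] fun T => T)
    (hψ_meas : AEStronglyMeasurable ψ (volume.restrict (Set.Ici 0)))
    (hψ : ψ ~[atTop] fun t => C * t ^ κ) (hκ : 0 ≤ κ)
    (hlo : Tendsto lo l atTop) (hle : ∀ᶠ r in l, lo r ≤ hi r) :
    (fun r => (∫ t in lo r..hi r, g t * ψ t) - c * ∫ t in lo r..hi r, ψ t)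
      =o[l] fun r => hi r ^ (κ + 1) := by
  have hone : LocallyIntegrable (fun _ => 1 : ℝ → ℝ) := locallyIntegrable_const 1
  have hψO : ψ =O[atTop] fun t => t ^ κ := hψ.isBigO.trans (isBigO_const_mul_self C _ _)
  have hφ : (fun t => ψ t - C * t ^ κ) =o[atTop] fun t => t ^ κ :=
    hψ.isLittleO.trans_isBigO (isBigO_const_mul_self C _ _)
  have hmain := (isLittleO_integral_rpow_mul (hg.sub (locallyIntegrable_const c))
    (isLittleO_integral_sub_const hg hmean) hκ hlo hle).const_mul_left C
  have herror := isLittleO_integral_mul hg hmean_abs hφ hκ hlo hle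
  have herror_one := isLittleO_integral_mul hone (by simp [isBigO_refl]) hφ hκ hlo hle
  refine ((hmain.add herror).sub (herror_one.const_mul_left c)).congr' ?_ .rfl
  have hpow_meas : Measurable fun t : ℝ => t ^ κ := by fun_prop
  have hpow := hpow_meas.aestronglyMeasurable (μ := volume.restrict (Set.Ici 0))
  have hpowO : (fun t : ℝ => t ^ κ) =O[atTop] fun t => t ^ κ := isBigO_refl _ _
  filter_upwards [eventually_intervalIntegrable_mul hg hψ_meas hψO hκ hlo hle,
    eventually_intervalIntegrable_mul hone hψ_meas hψO hκ hlo hle,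
    eventually_intervalIntegrable_mul hg hpow hpowO hκ hlo hle,
    eventually_intervalIntegrable_mul hone hpow hpowO hκ hlo hle] with r hψg hψ₁ hpg hp₁
  simp only [Pi.sub_apply, mul_one, mul_sub, sub_mul, mul_assoc, mul_comm (g _) (ψ _)] at hψ₁ hp₁ ⊢
  rw [intervalIntegral.integral_sub hpg (hp₁.mul_const c),
    intervalIntegral.integral_sub hψg (hpg.const_mul C),
    intervalIntegral.integral_sub hψ₁ (hp₁.const_mul C), intervalIntegral.integral_const_mul,
    intervalIntegral.integral_const_mul, intervalIntegral.integral_mul_const]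
  ring

theorem tendsto_weighted_average {c C σ τ : ℝ} (hg : LocallyIntegrable g)
    (hmean : Tendsto (fun T => T⁻¹ * ∫ t in (0 : ℝ)..T, g t) atTop (𝓝 c))
    (hmean_abs : (fun T => ∫ t in (0 : ℝ)..T, |g t|) =O[atTop] fun T => T)
    (hψ_meas : AEStronglyMeasurable ψ (volume.restrict (Set.Ici 0)))
    (hψ : ψ ~[atTop] fun t => C * t ^ κ) (hC : 0 < C) (hκ : 0 ≤ κ)
    (hlo : Tendsto lo l atTop) (hσ : 1 < σ)
    (hhi : ∀ᶠ r in l, hi r ∈ Set.Icc (σ * lo r) (τ * lo r)) :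
    Tendsto (fun r => (∫ t in lo r..hi r, ψ t)⁻¹ * ∫ t in lo r..hi r, g t * ψ t) l (𝓝 c) := by
  have hle : ∀ᶠ r in l, lo r ≤ hi r := by
    filter_upwards [hhi, hlo.eventually_ge_atTop 0] with r hr hpos
    exact (le_mul_of_one_le_left hpos hσ.le).trans hr.1
  have hψ_int : ∀ᶠ r in l, IntervalIntegrable ψ volume (lo r) (hi r) := by
    simpa only [mul_one] using eventually_intervalIntegrable_mul (locallyIntegrable_const (1 : ℝ))
      hψ_meas (hψ.isBigO.trans (isBigO_const_mul_self C _ _)) hκ hlo hle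
  have hdefect := isLittleO_integral_mul_sub hg hmean hmean_abs hψ_meas hψ hκ hlo hle
  have hvolume := (isBigO_rpow_add_one_of_mem_Icc hκ hlo hσ hhi).trans
    (isBigO_integral_of_isEquivalent hψ_int hψ hC hκ hlo hle)
  have hne : ∀ᶠ r in l, ∫ t in lo r..hi r, ψ t ≠ 0 := by
    filter_upwards [hvolume.eq_zero_imp, (tendsto_atTop_mono' l hle hlo).eventually_gt_atTop 0]
      with r hzero hr hvanish
    exact (Real.rpow_pos_of_pos hr _).ne' (hzero hvanish)
  have hlim := (hdefect.trans_isBigO hvolume).tendsto_div_nhds_zero.add_const c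
  rw [zero_add] at hlim
  refine hlim.congr' (hne.mono fun r hr => ?_)
  field_simp
  ring

end Shells

lemma isEquivalent_const_mul_rpow {ψ : ℝ → ℝ} {C κ κ' C₁ : ℝ} (hC : C ≠ 0) (hκ : 0 < κ)
    (hκ' : κ' < κ) (hbound : ∀ t : ℝ, 0 ≤ t → |ψ t - C * t ^ κ| ≤ C₁ * (1 + t ^ κ')) :
    ψ ~[atTop] fun t => C * t ^ κ := by
  have hbigO : (fun t => ψ t - C * t ^ κ) =O[atTop] fun t => 1 + t ^ κ' := by
    refine .of_bound |C₁| ?_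
    filter_upwards [eventually_ge_atTop 0] with t ht
    rw [Real.norm_of_nonneg (by positivity : 0 ≤ 1 + t ^ κ')]
    exact (hbound t ht).trans (by gcongr; exact le_abs_self C₁)
  have hpow : (fun t : ℝ => t ^ κ') =o[atTop] fun t => t ^ κ := by
    refine isLittleO_of_tendsto' ?_ ?_
    · filter_upwards [eventually_gt_atTop 0] with t ht h
      exact absurd h (Real.rpow_pos_of_pos ht κ).ne'
    · refine (tendsto_rpow_neg_atTop (sub_pos.2 hκ')).congr' ?_
      filter_upwards [eventually_gt_atTop 0] with t ht
      rw [neg_sub, Real.rpow_sub ht]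
  have hone : (fun _ : ℝ => (1 : ℝ)) =o[atTop] fun t => t ^ κ :=
    isLittleO_const_left.2 (.inr (tendsto_norm_atTop_atTop.comp (tendsto_rpow_atTop hκ)))
  exact hbigO.trans_isLittleO ((hone.add hpow).const_mul_right hC)

lemma sinh_add_eq_exp_mul_sinh (x y : ℝ) :
    Real.sinh (x + y) = Real.exp y * Real.sinh x + Real.exp (-x) * Real.sinh y := by
  rw [Real.sinh_add, ← Real.cosh_add_sinh, ← Real.cosh_sub_sinh]
  ring

lemma tendsto_sinh_atTop : Tendsto Real.sinh atTop atTop :=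
  tendsto_atTop_mono' _ ((eventually_ge_atTop 0).mono fun _ => Real.self_le_sinh_iff.2) tendsto_id

lemma eventually_sinh_add_mem_Icc {y : ℝ} (hy : 0 ≤ y) :
    ∀ᶠ x in atTop, Real.sinh (x + y) ∈
      Set.Icc (Real.exp y * Real.sinh x) ((Real.exp y + Real.sinh y) * Real.sinh x) := by
  filter_upwards [eventually_ge_atTop 0, tendsto_sinh_atTop.eventually_ge_atTop 1] with x hx hsinh
  have hy₀ : 0 ≤ Real.sinh y := Real.sinh_nonneg_iff.2 hy
  rw [sinh_add_eq_exp_mul_sinh, add_mul, mul_comm (Real.sinh y)]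
  refine ⟨le_add_of_nonneg_right (mul_nonneg (Real.exp_pos _).le hy₀), ?_⟩
  refine add_le_add_right (mul_le_mul_of_nonneg_right ?_ hy₀) _
  exact (Real.exp_le_one_iff.2 (neg_nonpos.2 hx)).trans hsinh

theorem ae_tendsto_weighted_orbit_average {ι X : Type*} [AddAction ℝ X] [MeasurableSpace X]
    [MeasurableVAdd₂ ℝ X] {μ : Measure X} [IsProbabilityMeasure μ] [ErgodicVAdd ℝ X μ]
    {f : X → ℝ} (hf : Integrable f μ) {ψ : ℝ → ℝ} {C κ σ τ : ℝ}
    (hψ_meas : AEStronglyMeasurable ψ (volume.restrict (Set.Ici 0)))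
    (hψ : ψ ~[atTop] fun t => C * t ^ κ) (hC : 0 < C) (hκ : 0 ≤ κ)
    {l : Filter ι} {lo hi : ι → ℝ} (hlo : Tendsto lo l atTop) (hσ : 1 < σ)
    (hhi : ∀ᶠ r in l, hi r ∈ Set.Icc (σ * lo r) (τ * lo r)) :
    ∀ᵐ x ∂μ, Tendsto
      (fun r => (∫ t in lo r..hi r, ψ t)⁻¹ * ∫ t in lo r..hi r, f (t +ᵥ x) * ψ t)
      l (𝓝 (∫ y, f y ∂μ)) := by
  filter_upwards [ae_locallyIntegrable_vadd hf (volume : Measure ℝ),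
    ae_tendsto_inv_mul_orbitIntegral hf, ae_tendsto_inv_mul_orbitIntegral hf.abs]
    with x hloc hmean hmean_abs
  refine tendsto_weighted_average hloc hmean ?_ hψ_meas hψ hC hκ hlo hσ hhi
  refine (hmean_abs.isBigO_one ℝ).mul (isBigO_refl (fun T : ℝ => T) atTop) |>.congr' ?_ ?_
  · filter_upwards [eventually_ne_atTop 0] with T hT
    rw [orbitIntegral]
    field_simp
  · exact .of_eq (funext fun T => one_mul T)

theorem weighted_shell_averages_pointwise_ergodic_general {X : Type*} [MeasurableSpace X]
    {μ : Measure X} [IsProbabilityMeasure μ] {h : ℝ → X → X}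
    (h_zero : ∀ x, h 0 x = x) (h_add : ∀ s t x, h (s + t) x = h s (h t x))
    (h_meas : Measurable fun q : ℝ × X => h q.1 q.2)
    (h_mp : ∀ t : ℝ, MeasurePreserving (h t) μ μ)
    (h_erg : ∀ s : Set X, MeasurableSet s → (∀ t : ℝ, h t ⁻¹' s = s) → μ s = 0 ∨ μ s = 1)
    {ψ : ℝ → ℝ} (hψ_meas : AEStronglyMeasurable ψ (volume.restrict (Set.Ici 0)))
    {C κ : ℝ} (hC : 0 < C) (hκ : 0 ≤ κ) (hψ : ψ ~[atTop] fun t => C * t ^ κ)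
    {b ε : ℝ} (hb : 0 < b) (hε : 0 < ε) {f : X → ℝ} (hf : Integrable f μ) :
    ∀ᵐ x ∂μ, Tendsto
      (fun r : ℝ =>
        (∫ t in (2 * Real.sinh (b * r))..(2 * Real.sinh (b * (r + ε))), ψ t)⁻¹ *
          ∫ t in (2 * Real.sinh (b * r))..(2 * Real.sinh (b * (r + ε))),
            f (h (-t) x) * ψ t)
      atTop (𝓝 (∫ y, f y ∂μ)) := by
  let _ : AddAction ℝ X :=
    { vadd := fun t => h (-t)
      zero_vadd := fun x => (congrArg (h · x) neg_zero).trans (h_zero x)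
      add_vadd := fun s t x => (congrArg (h · x) (neg_add s t)).trans (h_add (-s) (-t) x) }
  have : MeasurableVAdd₂ ℝ X := ⟨h_meas.comp (measurable_fst.neg.prodMk measurable_snd)⟩
  have : VAddInvariantMeasure ℝ X μ :=
    ⟨fun t _ hs => (h_mp (-t)).measure_preimage hs.nullMeasurableSet⟩
  have : ErgodicVAdd ℝ X μ := by
    refine ergodicVAdd_of_forall_preimage_vadd_eq volume fun s hs hinv => ?_
    have hzero_or_one := h_erg s hs fun t =>
      (congrArg (h · ⁻¹' s) (neg_neg t)).symm.trans (hinv (-t))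
    exact eventuallyConst_set.2 <| hzero_or_one.symm.imp (prob_compl_eq_zero_iff hs).2
      measure_eq_zero_iff_ae_notMem.1
  have hr : Tendsto (fun r => b * r) atTop atTop := tendsto_id.const_mul_atTop hb
  refine ae_tendsto_weighted_orbit_average hf hψ_meas hψ hC hκ
    ((tendsto_sinh_atTop.comp hr).const_mul_atTop two_pos) (Real.one_lt_exp_iff.2 (mul_pos hb hε))
    (τ := Real.exp (b * ε) + Real.sinh (b * ε)) ?_
  filter_upwards [hr.eventually (eventually_sinh_add_mem_Icc (mul_pos hb hε).le)] with r hmem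
  simpa [mul_add, mul_left_comm _ (2 : ℝ)] using hmem

/-- **Pointwise ergodic theorem for weighted averages over exponentially growing
shells.**  Let `(h_t)` be a jointly measurable measure-preserving ergodic flow on a
standard probability space `(X,μ)` and let `ψ : [0,∞) → [0,∞)` be continuous with
`|ψ(t) − C t^κ| ≤ C₁ (1 + t^{κ'})` for constants `C > 0`, `κ > κ' > 0`, `C₁ ≥ 0`.
Fix `b > 0` and `ε > 0`.  Then for every `f ∈ L¹(X,μ)` the shell averages
`A_{r,ε} f(x) = (∫_{2 sinh(br)}^{2 sinh(b(r+ε))} ψ)⁻¹ ∫_{2 sinh(br)}^{2 sinh(b(r+ε))}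
f(h_{-t} x) ψ(t) dt` converge to `∫ f dμ` for `μ`-a.e. `x` as `r → ∞`. -/
theorem weighted_shell_averages_pointwise_ergodic
    (X : Type) [MeasurableSpace X] [StandardBorelSpace X]
    (μ : Measure X) [IsProbabilityMeasure μ]
    (h : ℝ → X → X)
    (h_zero : ∀ x, h 0 x = x)
    (h_add : ∀ s t x, h (s + t) x = h s (h t x))
    (h_meas : Measurable fun q : ℝ × X => h q.1 q.2)
    (h_mp : ∀ t : ℝ, MeasurePreserving (h t) μ μ)
    (h_erg : ∀ s : Set X, MeasurableSet s → (∀ t : ℝ, h t ⁻¹' s = s) → μ s = 0 ∨ μ s = 1)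
    (ψ : ℝ → ℝ)
    (hψ_cont : ContinuousOn ψ (Set.Ici 0))
    (hψ_nonneg : ∀ t : ℝ, 0 ≤ t → 0 ≤ ψ t)
    (C κ κ' C₁ : ℝ) (hC : 0 < C) (hκ'pos : 0 < κ') (hκ : κ' < κ) (hC₁ : 0 ≤ C₁)
    (hbound : ∀ t : ℝ, 0 ≤ t → |ψ t - C * t ^ κ| ≤ C₁ * (1 + t ^ κ'))
    (b ε : ℝ) (hb : 0 < b) (hε : 0 < ε)
    (f : X → ℝ) (hf : Integrable f μ) :
    ∀ᵐ x ∂μ, Tendsto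
      (fun r : ℝ =>
        (∫ t in (2 * Real.sinh (b * r))..(2 * Real.sinh (b * (r + ε))), ψ t)⁻¹ *
          ∫ t in (2 * Real.sinh (b * r))..(2 * Real.sinh (b * (r + ε))),
            f (h (-t) x) * ψ t)
      atTop (𝓝 (∫ y, f y ∂μ)) := by
  exact weighted_shell_averages_pointwise_ergodic_general h_zero h_add h_meas h_mp h_erg
    (hψ_cont.aestronglyMeasurable measurableSet_Ici) hC (hκ'pos.trans hκ).le
    (isEquivalent_const_mul_rpow hC.ne' (hκ'pos.trans hκ) hκ hbound) hb hε hf
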